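/- Let C₁,…,C₇ be seven pairwise disjoint maximal commuting Pauli classes in dimension d = 8. Then there is no choice of operators σ₁ ∈ C₁, …, σ₇ ∈ C₇ such that σ₁,…,σ₇ pairwise commute; in particular, no maximal commuting Pauli class can be formed by taking exactly one member (up to phase) from each of the seven classes. -/

import Mathlib

open Matrix

noncomputable section

/-- Matrices on the Hilbert space of `n` qubits, with rows and columns indexed by
bit strings `Fin n → Fin 2`. -/
abbrev QMat (n : ℕ) := Matrix (Fin n → Fin 2) (Fin n → Fin 2) ℂ

/-- The single-qubit identity. -/
def pI : Matrix (Fin 2) (Fin 2) ℂ := 1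

/-- The single-qubit Pauli X. -/
def pX : Matrix (Fin 2) (Fin 2) ℂ := !![0, 1; 1, 0]

/-- The single-qubit Pauli Y. -/
def pY : Matrix (Fin 2) (Fin 2) ℂ := !![0, -Complex.I; Complex.I, 0]

/-- The single-qubit Pauli Z. -/
def pZ : Matrix (Fin 2) (Fin 2) ℂ := !![1, 0; 0, -1]

/-- The `n`-fold Kronecker product `W 0 ⊗ ⋯ ⊗ W (n-1)`, realized on indices
`Fin n → Fin 2`. -/
def kron (n : ℕ) (W : Fin n → Matrix (Fin 2) (Fin 2) ℂ) : QMat n :=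
  fun v w => ∏ j, W j (v j) (w j)

/-- `M` is an `n`-qubit Pauli operator: an `n`-fold Kronecker product of matrices
from `{I₂, X, Y, Z}`. -/
def IsPauliOp (n : ℕ) (M : QMat n) : Prop :=
  ∃ W : Fin n → Matrix (Fin 2) (Fin 2) ℂ,
    (∀ j, W j = pI ∨ W j = pX ∨ W j = pY ∨ W j = pZ) ∧ M = kron n W

/-- Two matrices are equal up to phase if one is a nonzero scalar multiple of the other. -/
def PhaseEq {m : Type*} (A B : Matrix m m ℂ) : Prop := ∃ c : ℂ, c ≠ 0 ∧ A = c • B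

/-- A maximal commuting Pauli class in dimension `d = 2 ^ n`: a set of `d - 1`
pairwise commuting non-identity `n`-qubit Pauli operators, pairwise distinct up to phase. -/
def IsMaxClass (n : ℕ) (C : Set (QMat n)) : Prop :=
  C.Finite ∧ C.ncard = 2 ^ n - 1 ∧
  (∀ U ∈ C, IsPauliOp n U ∧ U ≠ 1) ∧
  (∀ U ∈ C, ∀ V ∈ C, U * V = V * U) ∧
  (∀ U ∈ C, ∀ V ∈ C, U ≠ V → ¬ PhaseEq U V)

/-- Two classes are disjoint if no member of one is equal up to phase to a member of the other. -/
def ClassDisjoint {n : ℕ} (C D : Set (QMat n)) : Prop :=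
  ∀ U ∈ C, ∀ V ∈ D, ¬ PhaseEq U V

/-- Two classes are equal up to phase (as sets of operators). -/
def ClassPhaseEq {n : ℕ} (C D : Set (QMat n)) : Prop :=
  (∀ U ∈ C, ∃ V ∈ D, PhaseEq U V) ∧ (∀ V ∈ D, ∃ U ∈ C, PhaseEq U V)

/-- The standard Hermitian inner product on `ι → ℂ` (conjugate-linear in the first slot). -/
def cinner {ι : Type*} [Fintype ι] (x y : ι → ℂ) : ℂ :=
  ∑ k, (starRingEnd ℂ) (x k) * y k

lemma zmod2_cases (t : ZMod 2) : t = 0 ∨ t = 1 := by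
  fin_cases t
  · left; rfl
  · right; rfl

def sgF (t : ZMod 2) : ℂ := if t = 0 then 1 else -1

lemma sgF_add (s t : ZMod 2) : sgF (s + t) = sgF s * sgF t := by
  have h2 : (1 : ZMod 2) + 1 = 0 := by decide
  rcases zmod2_cases s with rfl | rfl <;> rcases zmod2_cases t with rfl | rfl <;> simp [sgF, h2]

lemma sgF_sum (f : Fin 3 → ZMod 2) : sgF (∑ j, f j) = ∏ j, sgF (f j) := by
  simp only [Fin.sum_univ_three, Fin.prod_univ_three, sgF_add]

def pP (x : ZMod 2 × ZMod 2) : Matrix (Fin 2) (Fin 2) ℂ :=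
  if x.1 = 0 then (if x.2 = 0 then pI else pZ) else (if x.2 = 0 then pX else pY)

lemma pP_comm (x y : ZMod 2 × ZMod 2) :
    pP x * pP y = sgF (x.1 * y.2 + x.2 * y.1) • (pP y * pP x) := by
  obtain ⟨a, b⟩ := x
  obtain ⟨c, d⟩ := y
  have h2 : (1 : ZMod 2) + 1 = 0 := by decide
  rcases zmod2_cases a with rfl | rfl <;> rcases zmod2_cases b with rfl | rfl <;>
  rcases zmod2_cases c with rfl | rfl <;> rcases zmod2_cases d with rfl | rfl <;>
    simp [pP, sgF, pI, pX, pY, pZ, h2]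

lemma pP_sq (x : ZMod 2 × ZMod 2) : pP x * pP x = 1 := by
  obtain ⟨a, b⟩ := x
  rcases zmod2_cases a with rfl | rfl <;> rcases zmod2_cases b with rfl | rfl <;>
    simp [pP, pI, pX, pY, pZ, Matrix.one_fin_two]

lemma kron_mul (W W' : Fin 3 → Matrix (Fin 2) (Fin 2) ℂ) :
    kron 3 W * kron 3 W' = kron 3 (fun j => W j * W' j) := by
  ext v w
  simp only [kron, Matrix.mul_apply]
  rw [Finset.prod_univ_sum, Fintype.piFinset_univ]
  simp only [Finset.prod_mul_distrib]

lemma kron_smul (c : Fin 3 → ℂ) (W : Fin 3 → Matrix (Fin 2) (Fin 2) ℂ) :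
    kron 3 (fun j => c j • W j) = (∏ j, c j) • kron 3 W := by
  ext v w
  simp [kron, Finset.prod_mul_distrib]

lemma kron_one : kron 3 (fun _ => 1) = 1 := by
  ext v w
  simp only [kron, Matrix.one_apply]
  by_cases h : v = w
  · simp [h]
  · rw [if_neg h]
    obtain ⟨j, hj⟩ := Function.ne_iff.mp h
    exact Finset.prod_eq_zero (Finset.mem_univ j) (by simp [hj])

abbrev PV := Fin 3 → ZMod 2 × ZMod 2

def pK (p : PV) : QMat 3 := kron 3 (fun j => pP (p j))

def pB : LinearMap.BilinForm (ZMod 2) PV :=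
  LinearMap.mk₂ (ZMod 2) (fun p q => ∑ j, ((p j).1 * (q j).2 + (p j).2 * (q j).1))
    (by intros; rw [← Finset.sum_add_distrib]; refine Finset.sum_congr rfl fun _ _ => ?_; simp; ring)
    (by intros; rw [smul_eq_mul, Finset.mul_sum]; refine Finset.sum_congr rfl fun _ _ => ?_; simp; ring)
    (by intros; rw [← Finset.sum_add_distrib]; refine Finset.sum_congr rfl fun _ _ => ?_; simp; ring)
    (by intros; rw [smul_eq_mul, Finset.mul_sum]; refine Finset.sum_congr rfl fun _ _ => ?_; simp; ring)

lemma pB_apply (p q : PV) : pB p q = ∑ j, ((p j).1 * (q j).2 + (p j).2 * (q j).1) := rfl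

lemma pB_symm (p q : PV) : pB p q = pB q p := by
  simp only [pB_apply]
  refine Finset.sum_congr rfl fun _ _ => ?_
  ring

lemma pB_self (p : PV) : pB p p = 0 := by
  simp only [pB_apply]
  refine Finset.sum_eq_zero fun j _ => ?_
  rw [mul_comm]
  exact CharTwo.add_self_eq_zero _

lemma pB_left (p : PV) (h : ∀ q, pB p q = 0) : p = 0 := by
  funext j
  have h1 := h (Pi.single j (0, 1))
  have h2 := h (Pi.single j (1, 0))
  rw [pB_apply, Finset.sum_eq_single j (by intro b _ hb; simp [Pi.single_eq_of_ne hb]) (by simp)]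
    at h1 h2
  simp at h1 h2
  exact Prod.ext h1 h2

lemma pB_refl : pB.IsRefl := fun p q h => by rw [pB_symm]; exact h

lemma pB_nondeg : pB.Nondegenerate :=
  ⟨fun p h => pB_left p h, fun p h => pB_left p fun q => by rw [pB_symm]; exact h q⟩

lemma pK_comm (p q : PV) : pK p * pK q = sgF (pB p q) • (pK q * pK p) := by
  rw [pK, pK, kron_mul, kron_mul, pB_apply, sgF_sum, ← kron_smul]
  simp only [← pP_comm]

lemma pK_sq (p : PV) : pK p * pK p = 1 := by
  rw [pK, kron_mul]
  simp only [pP_sq, kron_one]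

lemma pK_zero : pK 0 = 1 := by
  rw [← kron_one, pK]
  simp [pP, pI]

lemma pK_mul_ne (p q : PV) : pK p * pK q ≠ 0 := by
  intro h
  have : pK p * (pK p * pK q) * pK q = 0 := by rw [h]; simp
  rw [← mul_assoc, pK_sq, one_mul, pK_sq] at this
  exact one_ne_zero this

lemma sgF_inj {s t : ZMod 2} (h : sgF s = sgF t) : s = t := by
  rcases zmod2_cases s with rfl | rfl <;> rcases zmod2_cases t with rfl | rfl <;>
    simp [sgF] at h ⊢ <;> norm_num [Complex.ext_iff] at h

lemma pK_commute {p q : PV} (h : pK p * pK q = pK q * pK p) : pB p q = 0 := by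
  have h1 := pK_comm p q
  rw [h] at h1
  apply sgF_inj
  have : (1 - sgF (pB p q)) • (pK q * pK p) = 0 := by
    rw [sub_smul, one_smul, ← h1, sub_self]
  rcases smul_eq_zero.mp this with h2 | h2
  · rw [← sub_eq_zero.mp h2]; simp [sgF]
  · exact absurd h2 (pK_mul_ne _ _)

lemma pK_inj : Function.Injective pK := by
  intro p q h
  rw [← sub_eq_zero]
  apply pB_left
  intro r
  rw [map_sub, LinearMap.sub_apply, sub_eq_zero]
  have h1 := pK_comm p r
  rw [h, pK_comm q r] at h1
  exact (sgF_inj (smul_left_injective ℂ (pK_mul_ne r q) h1)).symm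

lemma exists_pK (M : QMat 3) (h : IsPauliOp 3 M) : ∃ p, pK p = M := by
  obtain ⟨W, hW, rfl⟩ := h
  have : ∀ j, ∃ x, pP x = W j := by
    intro j
    rcases hW j with h | h | h | h <;> rw [h]
    · exact ⟨(0, 0), by simp [pP]⟩
    · exact ⟨(1, 0), by simp [pP]⟩
    · exact ⟨(1, 1), by simp [pP]⟩
    · exact ⟨(0, 1), by simp [pP]⟩
  choose p hp using this
  exact ⟨p, by rw [pK]; simp only [hp]⟩

/-- A set of eight pairwise orthogonal vectors is a Lagrangian subspace. -/
lemma lagr (A : Set PV) (hc : A.ncard = 8) (hA : ∀ p ∈ A, ∀ q ∈ A, pB p q = 0) :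
    ∃ W : Submodule (ZMod 2) PV, (W : Set PV) = A ∧ Module.finrank (ZMod 2) W = 3 ∧
      ∀ p, (∀ q ∈ W, pB p q = 0) → p ∈ W := by
  set W := Submodule.span (ZMod 2) A with hW
  have hle : W ≤ pB.orthogonal W := by
    rw [hW, Submodule.span_le]
    intro p hp
    simp only [SetLike.mem_coe, LinearMap.BilinForm.mem_orthogonal_iff]
    intro q hq
    change pB q p = 0
    induction hq using Submodule.span_induction with
    | mem x hx => exact hA x hx p hp
    | zero => simp
    | add x y _ _ hx hy => simp [hx, hy]
    | smul c x _ hx => simp [hx]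
  have hf := LinearMap.BilinForm.finrank_orthogonal pB_nondeg W
  have h6 : Module.finrank (ZMod 2) PV = 6 := by
    rw [Module.finrank_pi_fintype]
    simp
  have hm := Submodule.finrank_mono hle
  have hcard : (W : Set PV).ncard = 2 ^ Module.finrank (ZMod 2) W := by
    have := Module.natCard_eq_pow_finrank (K := ZMod 2) (V := W)
    rw [Nat.card_zmod] at this
    exact this
  have hsub : A ⊆ (W : Set PV) := Submodule.subset_span
  have h8 := Set.ncard_le_ncard hsub (Set.toFinite _)
  have h3 : Module.finrank (ZMod 2) W ≤ 3 := by omega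
  have h3' : Module.finrank (ZMod 2) W = 3 := by
    rw [hc, hcard] at h8
    by_contra hne
    have : Module.finrank (ZMod 2) W ≤ 2 := by omega
    have := Nat.pow_le_pow_right (n := 2) (by norm_num) this
    omega
  refine ⟨W, ?_, h3', ?_⟩
  · refine (Set.eq_of_subset_of_ncard_le hsub ?_ (Set.toFinite _)).symm
    rw [hcard, h3', hc]; norm_num
  · intro p hp
    have : W = pB.orthogonal W := Submodule.eq_of_le_of_finrank_eq hle (by omega)
    rw [this, LinearMap.BilinForm.mem_orthogonal_iff]
    intro q hq
    change pB q p = 0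
    rw [pB_symm]; exact hp q hq

lemma ex_vec (L S : Submodule (ZMod 2) PV) (hL : Module.finrank (ZMod 2) L = 3)
    (hLiso : ∀ p ∈ L, ∀ q ∈ L, pB p q = 0) (a b d : PV) (ha : a ∈ L)
    (hS : ∀ p, pB p a = 0 → pB p b = 0 → pB p d = 0 → p ∈ S)
    (hLS : ∀ p ∈ L, p ∈ S → p ∈ Submodule.span (ZMod 2) {a}) :
    ∃ v ∈ L, pB v a = 0 ∧ pB v b = 0 ∧ pB v d = 1 := by
  let f : L →ₗ[ZMod 2] (ZMod 2 × ZMod 2) :=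
    (LinearMap.prod (pB.flip b) (pB.flip d)).comp L.subtype
  have hf : ∀ x : L, f x = (pB x b, pB x d) := fun x => rfl
  have hk : Module.finrank (ZMod 2) (LinearMap.ker f) ≤ 1 := by
    have h1 : (LinearMap.ker f).map L.subtype ≤ Submodule.span (ZMod 2) {a} := by
      rintro _ ⟨x, hx, rfl⟩
      have hx' : f x = 0 := hx
      rw [hf, Prod.mk_eq_zero] at hx'
      exact hLS _ x.2 (hS _ (hLiso _ x.2 _ ha) hx'.1 hx'.2)
    have h2 := Submodule.finrank_mono h1
    rw [Submodule.finrank_map_subtype_eq] at h2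
    exact h2.trans (by simpa using finrank_span_le_card (R := ZMod 2) ({a} : Set PV))
  have hr := LinearMap.finrank_range_add_finrank_ker f
  have htop : LinearMap.range f = ⊤ := by
    apply Submodule.eq_top_of_finrank_eq
    have := Submodule.finrank_le (LinearMap.range f)
    have h2 : Module.finrank (ZMod 2) (ZMod 2 × ZMod 2) = 2 := by simp
    omega
  obtain ⟨x, hx⟩ := LinearMap.range_eq_top.mp htop (0, 1)
  rw [hf, Prod.mk.injEq] at hx
  exact ⟨x, x.2, hLiso _ x.2 _ ha, hx.1, hx.2⟩

/-- Two vectors differing by an element of the span of `a, b` give a common nonzero vector. -/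
lemma no_pair (L M : Submodule (ZMod 2) PV) (hLM : ∀ p ∈ L, p ∈ M → p = 0)
    (a b d v w : PV) (ha : a ∈ L) (hb : b ∈ M) (hv : v ∈ L) (hw : w ∈ M)
    (hda : pB a d = 0) (hvd : pB v d = 1)
    (h : v - w ∈ Submodule.span (ZMod 2) {a, b}) : False := by
  obtain ⟨x, y, hxy⟩ := Submodule.mem_span_pair.mp h
  have he : v - x • a = w + y • b := by
    rw [sub_eq_iff_eq_add] at *
    rw [eq_sub_of_add_eq hxy]; abel
  have h0 := hLM (v - x • a) (L.sub_mem hv (L.smul_mem _ ha))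
    (by rw [he]; exact M.add_mem hw (M.smul_mem _ hb))
  have : pB (v - x • a) d = 1 := by simp [hda, hvd]
  rw [h0] at this
  simp at this

lemma core (L : Fin 7 → Submodule (ZMod 2) PV) (hfr : ∀ i, Module.finrank (ZMod 2) (L i) = 3)
    (hiso : ∀ i, ∀ p ∈ L i, ∀ q ∈ L i, pB p q = 0)
    (hd : ∀ i j, i ≠ j → ∀ p ∈ L i, p ∈ L j → p = 0)
    (s : Fin 7 → PV) (hs : ∀ i, s i ∈ L i) (hs0 : ∀ i, s i ≠ 0)
    (hsc : ∀ i j, pB (s i) (s j) = 0) : False := by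
  have hinj : Function.Injective s := by
    intro i j h
    by_contra hne
    exact hs0 i (hd i j hne _ (hs i) (by rw [h]; exact hs j))
  have hA : (insert 0 (Set.range s)).ncard = 8 := by
    rw [Set.ncard_insert_of_notMem (by rintro ⟨i, hi⟩; exact hs0 i hi) (Set.toFinite _),
      Set.ncard_range_of_injective hinj]
    simp
  obtain ⟨S, hS, hS3, hSmax⟩ := lagr _ hA (by
    rintro p (rfl | ⟨i, rfl⟩) q (rfl | ⟨j, rfl⟩) <;> simp [hsc])
  have hmem : ∀ p, p ∈ S ↔ p = 0 ∨ ∃ i, s i = p := by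
    intro p
    rw [← SetLike.mem_coe, hS]; rfl
  have hsS : ∀ i, s i ∈ S := fun i => (hmem _).2 (Or.inr ⟨i, rfl⟩)
  have hSiso : ∀ p ∈ S, ∀ q ∈ S, pB p q = 0 := by
    intro p hp q hq
    rcases (hmem p).1 hp with rfl | ⟨i, rfl⟩ <;> rcases (hmem q).1 hq with rfl | ⟨j, rfl⟩ <;>
      simp [hsc]
  have hLS : ∀ i, ∀ p ∈ L i, p ∈ S → p ∈ Submodule.span (ZMod 2) {s i} := by
    intro i p hp hpS
    rcases (hmem p).1 hpS with rfl | ⟨j, rfl⟩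
    · exact Submodule.zero_mem _
    · by_cases hij : i = j
      · subst hij; exact Submodule.mem_span_singleton_self _
      · exact absurd (hd i j hij _ hp (hs j)) (hs0 j)
  have h01 : s 0 + s 1 ≠ 0 := by
    intro h
    have := eq_neg_of_add_eq_zero_left h
    rw [ZModModule.neg_eq_self] at this
    exact absurd (hinj this) (by decide)
  obtain ⟨k, hk⟩ : ∃ k, s k = s 0 + s 1 :=
    ((hmem _).1 (S.add_mem (hsS 0) (hsS 1))).resolve_left h01
  have hk0 : k ≠ 0 := by
    rintro rfl
    exact hs0 1 (by simpa using hk)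
  have hk1 : k ≠ 1 := by
    rintro rfl
    exact hs0 0 (by simpa using hk)
  set a := s 0 with ha
  set b := s 1 with hb
  let P := Submodule.span (ZMod 2) {a, b}
  have haP : a ∈ P := Submodule.subset_span (by simp)
  have hbP : b ∈ P := Submodule.subset_span (by simp)
  have hPS : P ≤ S := by
    rw [Submodule.span_le]
    rintro x (rfl | rfl)
    · exact hsS 0
    · exact hsS 1
  have hP2 : Module.finrank (ZMod 2) P ≤ 2 := by
    have h1 : P = Submodule.span (ZMod 2) (Set.range ![a, b]) := by
      simp [P, Set.pair_comm]
    rw [h1]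
    exact finrank_range_le_card (R := ZMod 2) ![a, b]
  obtain ⟨d, hdS, hdP⟩ : ∃ d ∈ S, d ∉ P := by
    by_contra! hcon
    have := Submodule.finrank_mono (R := ZMod 2) (s := S) (t := P) hcon
    omega
  -- every element of S is in P or d + P
  have hP2' : 2 ≤ Module.finrank (ZMod 2) P := by
    have h1 : Submodule.span (ZMod 2) {a} < P := by
      refine lt_of_le_of_ne (Submodule.span_mono (by simp)) fun h => ?_
      have : b ∈ Submodule.span (ZMod 2) {a} := h ▸ hbP
      obtain ⟨c, hc⟩ := Submodule.mem_span_singleton.mp this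
      rcases zmod2_cases c with rfl | rfl
      · exact hs0 1 (by simpa using hc.symm)
      · rw [one_smul] at hc
        exact absurd (hinj hc) (by decide)
    have h2 := Submodule.finrank_lt_finrank_of_lt h1
    rw [finrank_span_singleton (hs0 0)] at h2
    omega
  have hSd : P ⊔ Submodule.span (ZMod 2) {d} = S := by
    have hle : P ⊔ Submodule.span (ZMod 2) {d} ≤ S :=
      sup_le hPS (by rw [Submodule.span_singleton_le_iff_mem]; exact hdS)
    apply Submodule.eq_of_le_of_finrank_le hle
    have h1 : P < P ⊔ Submodule.span (ZMod 2) {d} := by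
      refine lt_of_le_of_ne le_sup_left fun h => hdP ?_
      rw [h]
      exact Submodule.mem_sup_right (Submodule.mem_span_singleton_self d)
    have h2 := Submodule.finrank_lt_finrank_of_lt h1
    omega
  have hdecomp : ∀ p ∈ S, p ∈ P ∨ p - d ∈ P := by
    intro p hp
    rw [← hSd] at hp
    obtain ⟨x, hx, y, hy, rfl⟩ := Submodule.mem_sup.mp hp
    obtain ⟨c, rfl⟩ := Submodule.mem_span_singleton.mp hy
    rcases zmod2_cases c with rfl | rfl
    · left; simpa using hx
    · right; simpa using hx
  have hgen : ∀ p, pB p a = 0 → pB p b = 0 → pB p d = 0 → p ∈ S := by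
    intro p h1 h2 h3
    apply hSmax
    intro q hq
    rw [← hSd] at hq
    obtain ⟨x, hx, y, hy, rfl⟩ := Submodule.mem_sup.mp hq
    obtain ⟨c, rfl⟩ := Submodule.mem_span_singleton.mp hy
    obtain ⟨e, f, rfl⟩ := Submodule.mem_span_pair.mp hx
    simp [h1, h2, h3]
  have hgen' : ∀ u v, pB u a = 0 → pB u b = 0 → pB u d = 1 → pB v a = 0 → pB v b = 0 →
      pB v d = 1 → u - v ∈ S := by
    intro u v h1 h2 h3 h4 h5 h6
    apply hgen <;> simp [h1, h2, h3, h4, h5, h6]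
  obtain ⟨u, huL, hua, hub, hud⟩ := ex_vec (L 0) S (hfr 0) (hiso 0) a b d (hs 0) hgen (hLS 0)
  obtain ⟨v, hvL, hvb, hva, hvd⟩ := ex_vec (L 1) S (hfr 1) (hiso 1) b a d (hs 1)
    (fun p h1 h2 h3 => hgen p h2 h1 h3) (hLS 1)
  obtain ⟨w, hwL, hwk, hwa, hwd⟩ := ex_vec (L k) S (hfr k) (hiso k) (s k) a d (hs k)
    (fun p h1 h2 h3 => hgen p h2 (by rw [hk, map_add, h2, zero_add] at h1; exact h1) h3) (hLS k)
  have hwb : pB w b = 0 := by rw [hk, map_add, hwa, zero_add] at hwk; exact hwk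
  have had : pB a d = 0 := hSiso _ (hsS 0) _ hdS
  have hbd : pB b d = 0 := hSiso _ (hsS 1) _ hdS
  have hPak : P ≤ Submodule.span (ZMod 2) {a, s k} := by
    rw [Submodule.span_le]
    rintro x (rfl | rfl)
    · exact Submodule.subset_span (by simp)
    · have : b = s k - a := by rw [hk]; abel
      rw [this]
      exact Submodule.sub_mem _ (Submodule.subset_span (by simp)) (Submodule.subset_span (by simp))
  have hPbk : P ≤ Submodule.span (ZMod 2) {b, s k} := by
    rw [Submodule.span_le]
    rintro x (rfl | rfl)
    · have : a = s k - b := by rw [hk]; abel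
      rw [this]
      exact Submodule.sub_mem _ (Submodule.subset_span (by simp)) (Submodule.subset_span (by simp))
    · exact Submodule.subset_span (by simp)
  rcases hdecomp _ (hgen' u v hua hub hud hva hvb hvd) with h1 | h1
  · exact no_pair (L 0) (L 1) (hd 0 1 (by decide)) a b d u v (hs 0) (hs 1) huL hvL had hud h1
  rcases hdecomp _ (hgen' u w hua hub hud hwa hwb hwd) with h2 | h2
  · exact no_pair (L 0) (L k) (hd 0 k hk0.symm) a (s k) d u w (hs 0) (hs k) huL hwL had hud
      (hPak h2)
  · refine no_pair (L 1) (L k) (hd 1 k hk1.symm) b (s k) d v w (hs 1) (hs k) hvL hwL hbd hvd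
      (hPbk ?_)
    have := P.sub_mem h2 h1
    have e : u - w - d - (u - v - d) = v - w := by abel
    rwa [e] at this

/-- Given seven pairwise disjoint maximal commuting Pauli classes in `d = 8`,
one cannot choose one operator from each class such that the seven chosen operators
pairwise commute. -/
theorem no_transversal_commuting_seven_d8 (C : Fin 7 → Set (QMat 3))
    (hmax : ∀ i, IsMaxClass 3 (C i))
    (hdisj : ∀ i j, i ≠ j → ClassDisjoint (C i) (C j)) :
    ¬ ∃ σ : Fin 7 → QMat 3, (∀ i, σ i ∈ C i) ∧
        ∀ i j, σ i * σ j = σ j * σ i := by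
  rintro ⟨σ, hσ, hcomm⟩
  have hL : ∀ i, ∃ W : Submodule (ZMod 2) PV, (W : Set PV) = insert 0 (pK ⁻¹' (C i)) ∧
      Module.finrank (ZMod 2) W = 3 := by
    intro i
    obtain ⟨_, hcard, hP, hc, _⟩ := hmax i
    have h0 : (0 : PV) ∉ pK ⁻¹' (C i) := by
      intro h
      exact (hP _ h).2 pK_zero
    have hn : (pK ⁻¹' (C i)).ncard = 7 := by
      rw [Set.ncard_preimage_of_injective_subset_range pK_inj
        (fun M hM => exists_pK M (hP M hM).1), hcard]
      norm_num
    obtain ⟨W, h1, h2, _⟩ := lagr (insert 0 (pK ⁻¹' (C i)))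
      (by rw [Set.ncard_insert_of_notMem h0 (Set.toFinite _), hn]) (by
        rintro p (rfl | hp) q (rfl | hq)
        · simp
        · simp
        · simp
        · exact pK_commute (hc _ hp _ hq))
    exact ⟨W, h1, h2⟩
  choose L hLc hLf using hL
  have hmem : ∀ i p, p ∈ L i ↔ p = 0 ∨ pK p ∈ C i := by
    intro i p
    rw [← SetLike.mem_coe, hLc]; rfl
  have hs : ∀ i, ∃ p, pK p = σ i := fun i => exists_pK _ ((hmax i).2.2.1 _ (hσ i)).1
  choose s hs using hs
  refine core L hLf ?_ ?_ s (fun i => (hmem _ _).2 (Or.inr (by rw [hs]; exact hσ i))) ?_ ?_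
  · intro i p hp q hq
    rcases (hmem i p).1 hp with rfl | hp <;> rcases (hmem i q).1 hq with rfl | hq
    · simp
    · simp
    · simp
    · exact pK_commute ((hmax i).2.2.2.1 _ hp _ hq)
  · intro i j hij p hp hq
    rcases (hmem i p).1 hp with rfl | hp
    · rfl
    rcases (hmem j p).1 hq with rfl | hq
    · rfl
    exact absurd ⟨1, one_ne_zero, (one_smul _ _).symm⟩ (hdisj i j hij _ hp _ hq)
  · intro i h
    refine ((hmax i).2.2.1 _ (hσ i)).2 ?_
    rw [← hs, h, pK_zero]
  · intro i j
    apply pK_commute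
    rw [hs, hs]; exact hcomm i j
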